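/- Let λ ≥ 2 and let θ ∈ S¹ be λ-renormalizable, with λ-shrinking sequence ⟨g_i⟩ and sign sequence ⟨s_i⟩. If t > 0 is a critical time, then s_t = Σ^{γ(g_t)}(s₀). -/

import Mathlib

noncomputable section

abbrev F2 := FreeGroup Bool

def gh : F2 := FreeGroup.of true
def gv : F2 := FreeGroup.of false

def hmat (l : ℝ) : Matrix.SpecialLinearGroup (Fin 2) ℝ :=
  ⟨!![1, l; 0, 1], by norm_num [Matrix.det_fin_two_of]⟩

def vmat (l : ℝ) : Matrix.SpecialLinearGroup (Fin 2) ℝ :=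
  ⟨!![1, 0; l, 1], by norm_num [Matrix.det_fin_two_of]⟩

def rho (l : ℝ) : F2 →* Matrix.SpecialLinearGroup (Fin 2) ℝ :=
  FreeGroup.lift fun b => if b then hmat l else vmat l

def act (l : ℝ) (g : F2) (x : Fin 2 → ℝ) : Fin 2 → ℝ :=
  (rho l g).val.mulVec x

def nrm (x : Fin 2 → ℝ) : ℝ := Real.sqrt (x 0 ^ 2 + x 1 ^ 2)

def Circ : Set (Fin 2 → ℝ) := {x | nrm x = 1}

def gens : Set F2 := {gh, gv, gh⁻¹, gv⁻¹}

def ShrinkSet (l : ℝ) (g : F2) : Set (Fin 2 → ℝ) :=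
  {x | x ∈ Circ ∧ nrm (act l g x) < 1}

def ExpSet (l : ℝ) (g : F2) : Set (Fin 2 → ℝ) :=
  {x | x ∈ Circ ∧ 1 < nrm (act l g x)}

def IsGeodesicRay (g : ℕ → F2) : Prop :=
  g 0 = 1 ∧ (∀ n, g (n + 1) * (g n)⁻¹ ∈ gens) ∧ ∀ n, g (n + 2) * (g n)⁻¹ ≠ 1

def IsGeodesicSegment (g : ℕ → F2) (N : ℕ) : Prop :=
  g 0 = 1 ∧ (∀ n, n + 1 ≤ N → g (n + 1) * (g n)⁻¹ ∈ gens) ∧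
    ∀ n, n + 2 ≤ N → g (n + 2) * (g n)⁻¹ ≠ 1

def IsShrinkingSeq (l : ℝ) (g : ℕ → F2) (θ : Fin 2 → ℝ) : Prop :=
  ∀ ε : ℝ, 0 < ε → ∃ i : ℕ, nrm (act l (g i) θ) < ε

def Shrinkable (l : ℝ) (θ : Fin 2 → ℝ) : Prop :=
  ∀ ε : ℝ, 0 < ε → ∃ g : F2, nrm (act l g θ) < ε

def Renormalizable (l : ℝ) (θ : Fin 2 → ℝ) : Prop :=
  Shrinkable l θ ∧ ∀ k : F2, ∀ c : ℝ, act l (k * (gh * gv⁻¹) * k⁻¹) θ ≠ c • θ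

abbrev SP := Bool × Bool

def Quad (s : SP) : Set (Fin 2 → ℝ) :=
  {x | (if s.1 then 0 < x 0 else x 0 < 0) ∧ (if s.2 then 0 < x 1 else x 1 < 0)}

def letterSigma : Bool × Bool → SP → SP
  | (true, true), s => (s.2, s.2)
  | (false, true), s => (s.1, s.1)
  | (true, false), s => (!s.2, s.2)
  | (false, false), s => (s.1, !s.1)

def SigmaAct (g : F2) : SP → SP :=
  (FreeGroup.toWord g).foldr (fun w acc => letterSigma w ∘ acc) id

def gammaAut : F2 →* F2 := FreeGroup.lift fun b => if b then gv⁻¹ else gh⁻¹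

def rPerm (s : SP) : SP := (!s.2, s.1)

def rPermInv (s : SP) : SP := (s.2, !s.1)

def shiftRay (g : ℕ → F2) : ℕ → F2 := fun n => g (n + 1) * (g 1)⁻¹

def TailEquiv (g g' : ℕ → F2) : Prop :=
  ∃ m n : ℕ, shiftRay^[m] g = shiftRay^[n] g'

def seqPow (a : F2) : ℕ → F2 := fun n => a ^ n

def seqPer (a b : F2) : ℕ → F2 := fun n =>
  if n % 2 = 0 then (b * a) ^ (n / 2) else a * (b * a) ^ (n / 2)

def Cond1 (g : ℕ → F2) : Prop :=
  ¬ TailEquiv g (seqPow gh) ∧ ¬ TailEquiv g (seqPow gh⁻¹) ∧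
    ¬ TailEquiv g (seqPow gv) ∧ ¬ TailEquiv g (seqPow gv⁻¹)

def Cond2 (g : ℕ → F2) : Prop :=
  ¬ TailEquiv g (seqPer gh gv⁻¹) ∧ ¬ TailEquiv g (seqPer gh⁻¹ gv)

def adjSum {V : Type} (G : SimpleGraph V) (f : V → ℝ) (v : V) : ℝ :=
  ∑ᶠ w ∈ G.neighborSet v, f w

def BoundedValance {V : Type} (G : SimpleGraph V) : Prop :=
  ∃ D : ℕ, ∀ v, (G.neighborSet v).Finite ∧ (G.neighborSet v).ncard ≤ D

def BipartWith {V : Type} (G : SimpleGraph V) (A : Set V) : Prop :=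
  ∀ v w, G.Adj v w → (v ∈ A ↔ w ∉ A)

def Hop {V : Type} (G : SimpleGraph V) (A : Set V) (k : ℤ) (f : V → ℝ) : V → ℝ :=
  fun v => f v + (k : ℝ) * Set.indicator A (adjSum G f) v

def Vop {V : Type} (G : SimpleGraph V) (A : Set V) (k : ℤ) (f : V → ℝ) : V → ℝ :=
  fun v => f v + (k : ℝ) * Set.indicator Aᶜ (adjSum G f) v

def QuadV {V : Type} (A : Set V) (s : SP) : Set (V → ℝ) :=
  {f | (∀ v ∈ A, f v = 0 ∨ (if s.1 then 0 < f v else f v < 0)) ∧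
       ∀ v, v ∉ A → f v = 0 ∨ (if s.2 then 0 < f v else f v < 0)}

def valance {V : Type} (G : SimpleGraph V) (v : V) : ℕ := (G.neighborSet v).ncard

def evec {V : Type} (v : V) : V → ℝ := Set.indicator {v} 1

def InSpoke {V : Type} (G : SimpleGraph V) (x : V) : Prop :=
  ∃ k : ℕ, 2 ≤ k ∧ ∃ c : ℕ → V,
    (∀ i j, 1 ≤ i → i ≤ k → 1 ≤ j → j ≤ k → c i = c j → i = j) ∧
    valance G (c 1) = 1 ∧
    (∀ i, 2 ≤ i → i ≤ k - 1 →
      valance G (c i) = 2 ∧ G.Adj (c i) (c (i - 1)) ∧ G.Adj (c i) (c (i + 1))) ∧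
    ∃ i, 1 ≤ i ∧ i ≤ k ∧ x = c i

/-!
The generators act by shears, which change a single coordinate. By the triangle inequality, for
`2 ≤ |l|` a step along a reduced word that fails to shorten a vector is followed only by steps that
fail to shorten it; so along a shrinking geodesic ray every step shortens. If the letter `b`
shortens a vector of the quadrant `s'`, then the exponent of `b` fixes the product of the two signs
of `s'`, and `s'` is determined by its sign at the coordinate that `b` changes. Along the ray this
sign agrees with that of the preceding quadrant `s`, and `Σ^{γ(b)}` is precisely the map that keeps
this sign and replaces the other one by what `b` prescribes, so `Σ^{γ(b)}(s) = s'`.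
Induction gives `Σ^{γ(g_{n+1})}(s₀) = s_n` for every `n`; at a critical time `s_n = s_{n+1}`.
-/

section Order

theorem strictAnti_of_forall_exists_lt {α : Type*} [LinearOrder α] {N : ℕ → α}
    (hmin : ∀ i, ∃ j, N j < N i) (hstep : ∀ n, N n ≤ N (n + 1) → N (n + 1) ≤ N (n + 2)) :
    StrictAnti N := by
  refine strictAnti_nat_of_succ_lt fun n => ?_
  by_contra! hn
  have hsucc (k : ℕ) : N (n + k) ≤ N (n + k + 1) := by
    induction k with
    | zero => exact hn
    | succ k ih => exact hstep _ ih
  have htail : Monotone fun k => N (n + k) := monotone_nat_of_le_succ hsucc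
  obtain ⟨m, -, hm⟩ := (Finset.range (n + 1)).exists_min_image N Finset.nonempty_range_add_one
  obtain ⟨j, hj⟩ := hmin m
  refine hj.not_ge ?_
  rcases le_total j n with hjn | hnj
  · exact hm j (Finset.mem_range_succ_iff.2 hjn)
  · obtain ⟨k, rfl⟩ := Nat.exists_eq_add_of_le hnj
    exact (hm n (Finset.self_mem_range_succ n)).trans (htail k.zero_le)

variable {R : Type*} [CommRing R] [LinearOrder R] [IsStrictOrderedRing R] {c d u v : R}

theorem abs_le_abs_add_of_abs_sub_le {w : R} (h : |u - w| ≤ |u|) : |u| ≤ |u + w| := by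
  have htri : |u + u| ≤ |u + w| + |u - w| := by simpa using abs_add_le (u + w) (u - w)
  have hdouble : |u + u| = |u| + |u| := by rw [← two_mul, abs_mul, abs_two, two_mul]
  linarith

theorem abs_le_abs_add_mul_of_abs_sub_mul_le (hcd : 4 ≤ |c * d|) (h : |u - c * v| ≤ |u|) :
    |v| ≤ |v + d * u| := by
  have hcv : |c * v| ≤ 2 * |u| := by
    have htri : |c * v| ≤ |u| + |u - c * v| := by simpa using abs_sub u (u - c * v)
    linarith
  have hdu : 2 * |v| ≤ |d * u| := by
    suffices 4 * |v| ≤ 2 * |d * u| by linarith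
    calc 4 * |v| ≤ |c * d| * |v| := by gcongr
      _ = |d| * |c * v| := by simp only [abs_mul]; ring
      _ ≤ |d| * (2 * |u|) := by gcongr
      _ = 2 * |d * u| := by rw [abs_mul]; ring
  have htri : |d * u| ≤ |v + d * u| + |v| := by simpa using abs_sub (v + d * u) v
  linarith

theorem mul_mul_neg_of_abs_add_mul_lt (h : |u + c * v| < |u|) : c * (u * v) < 0 := by
  have hsq : (u + c * v) ^ 2 < u ^ 2 := sq_lt_sq.2 h
  nlinarith [sq_nonneg (c * v)]

end Order

section Letters

/-- A letter of a word in `F2`, in the encoding of `FreeGroup.toWord`: the first entry is `true`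
for `h` and `false` for `v`, the second is `true` for exponent `1` and `false` for exponent `-1`. -/
abbrev Letter := Bool × Bool

namespace Letter

/-- The coordinate changed by the shear of a letter. -/
def row (a : Letter) : Fin 2 := if a.1 then 0 else 1

/-- The coordinate a multiple of which the shear of a letter adds to the coordinate `row`. -/
def col (a : Letter) : Fin 2 := if a.1 then 1 else 0

/-- The off-diagonal entry of the shear of a letter. -/
def coeff (l : ℝ) (a : Letter) : ℝ := if a.2 then l else -l

/-- The image of a letter under the automorphism `gammaAut`, which maps letters to letters. -/
def gamma (a : Letter) : Letter := (!a.1, !a.2)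

variable {a b : Letter}

theorem row_ne_col (a : Letter) : a.row ≠ a.col := by
  rcases a with ⟨_ | _, _⟩ <;> simp [row, col]

theorem abs_coeff (l : ℝ) (a : Letter) : |a.coeff l| = |l| := by
  rcases a with ⟨_, _ | _⟩ <;> simp [coeff]

theorem eq_or_swap_of_isReduced (h : FreeGroup.IsReduced [b, a]) :
    b = a ∨ b.row = a.col ∧ b.col = a.row := by
  simp only [FreeGroup.isReduced_cons_cons, FreeGroup.IsReduced.singleton, and_true] at h
  revert a b
  decide

theorem isReduced_map_gamma {L : List Letter} (h : FreeGroup.IsReduced L) :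
    FreeGroup.IsReduced (L.map gamma) := by
  refine List.isChain_map gamma |>.2 (List.IsChain.imp ?_ h)
  intro a b
  simp [gamma]

end Letter

theorem exists_eq_mk_of_mem_gens {u : F2} (hu : u ∈ gens) :
    ∃ a : Letter, u = FreeGroup.mk [a] := by
  rcases hu with rfl | rfl | rfl | rfl
  exacts [⟨(true, true), rfl⟩, ⟨(false, true), rfl⟩, ⟨(true, false), rfl⟩, ⟨(false, false), rfl⟩]

end Letters

section Words

theorem toWord_letter_mul {a : Letter} {g : F2} (h : FreeGroup.IsReduced (a :: g.toWord)) :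
    (FreeGroup.mk [a] * g).toWord = a :: g.toWord := by
  rw [FreeGroup.toWord_mul, FreeGroup.toWord_mk, FreeGroup.IsReduced.singleton.reduce_eq,
    List.singleton_append, h.reduce_eq]

theorem gammaAut_mk (L : List Letter) :
    gammaAut (FreeGroup.mk L) = FreeGroup.mk (L.map Letter.gamma) := by
  have hletter (a : Letter) : gammaAut (FreeGroup.mk [a]) = FreeGroup.mk [a.gamma] := by
    rcases a with ⟨_ | _, _ | _⟩ <;>
      simp [gammaAut, Letter.gamma, gh, gv, FreeGroup.of, FreeGroup.inv_mk, FreeGroup.invRev]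
  induction L with
  | nil => exact map_one gammaAut
  | cons a L ih =>
    rw [← List.singleton_append, ← FreeGroup.mul_mk, map_mul, hletter, ih, FreeGroup.mul_mk,
      List.map_append, List.map_singleton]

theorem toWord_gammaAut (g : F2) : (gammaAut g).toWord = g.toWord.map Letter.gamma := by
  conv_lhs => rw [← FreeGroup.mk_toWord (x := g), gammaAut_mk, FreeGroup.toWord_mk]
  exact (Letter.isReduced_map_gamma FreeGroup.isReduced_toWord).reduce_eq

theorem sigmaAct_gammaAut_letter_mul {a : Letter} {g : F2}
    (h : FreeGroup.IsReduced (a :: g.toWord)) (s : SP) :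
    SigmaAct (gammaAut (FreeGroup.mk [a] * g)) s =
      letterSigma a.gamma (SigmaAct (gammaAut g) s) := by
  simp only [SigmaAct, toWord_gammaAut, toWord_letter_mul h, List.map_cons, List.foldr_cons,
    Function.comp_apply]

/-- `IsSpelledBy g a` says that the ray `g` starts at the identity and is obtained by multiplying
successively on the left by the letters `a 0, a 1, …`, no two consecutive ones of which cancel. -/
structure IsSpelledBy (g : ℕ → F2) (a : ℕ → Letter) : Prop where
  zero : g 0 = 1
  succ (n : ℕ) : g (n + 1) = FreeGroup.mk [a n] * g n
  isReduced (n : ℕ) : FreeGroup.IsReduced [a (n + 1), a n]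

theorem IsGeodesicRay.exists_isSpelledBy {g : ℕ → F2} (hg : IsGeodesicRay g) :
    ∃ a, IsSpelledBy g a := by
  obtain ⟨hzero, hgens, hbacktrack⟩ := hg
  choose a ha using fun n => exists_eq_mk_of_mem_gens (hgens n)
  have hsucc (n : ℕ) : g (n + 1) = FreeGroup.mk [a n] * g n := by rw [← ha, inv_mul_cancel_right]
  refine ⟨a, hzero, hsucc, fun n => ?_⟩
  simp only [FreeGroup.isReduced_cons_cons, FreeGroup.IsReduced.singleton, and_true]
  intro hgenerator
  by_contra hexponent
  have hinv : FreeGroup.mk [a (n + 1)] = (FreeGroup.mk [a n])⁻¹ := by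
    have hletter : a (n + 1) = ((a n).1, !(a n).2) :=
      Prod.ext hgenerator (Bool.eq_not.2 hexponent)
    rw [hletter, FreeGroup.inv_mk]
    rfl
  apply hbacktrack n
  rw [hsucc (n + 1), hsucc n, hinv, inv_mul_cancel_left, mul_inv_cancel]

theorem IsSpelledBy.isReduced_cons_toWord {g : ℕ → F2} {a : ℕ → Letter} (h : IsSpelledBy g a)
    (n : ℕ) : FreeGroup.IsReduced (a n :: (g n).toWord) := by
  induction n with
  | zero => simp [h.zero]
  | succ n ih =>
    rw [h.succ, toWord_letter_mul ih, FreeGroup.isReduced_cons_cons]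
    exact ⟨(FreeGroup.isReduced_cons_cons.1 (h.isReduced n)).1, ih⟩

end Words

section Shears

variable {l : ℝ} {a b : Letter} {z : Fin 2 → ℝ}

theorem rho_letter (l : ℝ) (a : Letter) :
    rho l (FreeGroup.mk [a]) =
      Matrix.SpecialLinearGroup.transvection a.row_ne_col (a.coeff l) := by
  have hh : hmat l = Matrix.SpecialLinearGroup.transvection (zero_ne_one (α := Fin 2)) l := by
    ext i j
    fin_cases i <;> fin_cases j <;> simp [hmat, Matrix.SpecialLinearGroup.transvection_coe]
  have hv : vmat l = Matrix.SpecialLinearGroup.transvection (one_ne_zero (α := Fin 2)) l := by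
    ext i j
    fin_cases i <;> fin_cases j <;> simp [vmat, Matrix.SpecialLinearGroup.transvection_coe]
  rcases a with ⟨_ | _, _ | _⟩ <;>
    simp [rho, hh, hv, Letter.row, Letter.col, Letter.coeff,
      Matrix.SpecialLinearGroup.transvection_inv]

theorem act_mul (l : ℝ) (g g' : F2) (x : Fin 2 → ℝ) :
    act l (g * g') x = act l g (act l g' x) := by
  simp only [act, map_mul, Matrix.mulVec_mulVec, Matrix.SpecialLinearGroup.coe_mul]

theorem act_letter (l : ℝ) (a : Letter) (z : Fin 2 → ℝ) :
    act l (FreeGroup.mk [a]) z =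
      Function.update z a.row (z a.row + a.coeff l * z a.col) := by
  rw [act, rho_letter, Matrix.SpecialLinearGroup.transvection_coe, Matrix.add_mulVec,
    Matrix.one_mulVec, Matrix.single_mulVec]
  ext i
  rcases eq_or_ne i a.row with rfl | hi <;> simp [*]

theorem nrm_le_nrm_update_iff {i : Fin 2} {r : ℝ} :
    nrm z ≤ nrm (Function.update z i r) ↔ |z i| ≤ |r| := by
  rw [nrm, nrm, Real.sqrt_le_sqrt_iff (by positivity), ← sq_le_sq]
  fin_cases i <;> simp

theorem nrm_le_nrm_act_letter_iff :
    nrm z ≤ nrm (act l (FreeGroup.mk [a]) z) ↔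
      |z a.row| ≤ |z a.row + a.coeff l * z a.col| := by
  rw [act_letter, nrm_le_nrm_update_iff]

theorem nrm_act_letter_le_of_isReduced (hl : 2 ≤ |l|) (hred : FreeGroup.IsReduced [b, a])
    (h : nrm z ≤ nrm (act l (FreeGroup.mk [a]) z)) :
    nrm (act l (FreeGroup.mk [a]) z) ≤
      nrm (act l (FreeGroup.mk [b]) (act l (FreeGroup.mk [a]) z)) := by
  rw [nrm_le_nrm_act_letter_iff] at h ⊢
  set w := act l (FreeGroup.mk [a]) z with hw
  have hrow : w a.row = z a.row + a.coeff l * z a.col := by simp [hw, act_letter]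
  have hcol : w a.col = z a.col := by simp [hw, act_letter, a.row_ne_col.symm]
  have hback : |w a.row - a.coeff l * w a.col| ≤ |w a.row| := by
    rwa [hcol, hrow, add_sub_cancel_right]
  rcases Letter.eq_or_swap_of_isReduced hred with rfl | ⟨hrow', hcol'⟩
  · exact abs_le_abs_add_of_abs_sub_le hback
  · rw [hrow', hcol']
    have hcoeff : 4 ≤ |a.coeff l * b.coeff l| := by
      rw [abs_mul, Letter.abs_coeff, Letter.abs_coeff]
      nlinarith
    exact abs_le_abs_add_mul_of_abs_sub_mul_le hcoeff hback

theorem IsSpelledBy.strictAnti_nrm {g : ℕ → F2} {a : ℕ → Letter} {x : Fin 2 → ℝ} (hl : 2 ≤ |l|)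
    (h : IsSpelledBy g a) (hshrink : IsShrinkingSeq l g x) (hpos : ∀ n, 0 < nrm (act l (g n) x)) :
    StrictAnti fun n => nrm (act l (g n) x) := by
  refine strictAnti_of_forall_exists_lt (fun i => hshrink _ (hpos i)) fun n hn => ?_
  rw [h.succ, act_mul] at hn
  rw [h.succ (n + 1), act_mul _ _ (g (n + 1)), h.succ n, act_mul]
  exact nrm_act_letter_le_of_isReduced hl (h.isReduced n) hn

end Shears

section Signs

/-- The sign of the `i`-th coordinate prescribed by a sign pair, `true` meaning positive. -/
def SP.sign (s : SP) (i : Fin 2) : Bool := if i = 0 then s.1 else s.2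

/-- The letter `a` shortens some vector of the quadrant `Quad s`, expressed by signs: those in `s`
differ if `a` has exponent `1` and agree if it has exponent `-1`. -/
def Letter.Contracts (a : Letter) (s : SP) : Prop := s.sign a.row = xor a.2 (s.sign a.col)

variable {l : ℝ} {a b : Letter} {s s' : SP} {z : Fin 2 → ℝ}

theorem mem_quad_iff : z ∈ Quad s ↔ ∀ i, if s.sign i then 0 < z i else z i < 0 := by
  simp [Quad, SP.sign, Fin.forall_fin_two]

theorem ne_zero_of_mem_quad (hz : z ∈ Quad s) (i : Fin 2) : z i ≠ 0 := by
  grind [mem_quad_iff.1 hz i]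

theorem pos_iff_of_mem_quad (hz : z ∈ Quad s) (i : Fin 2) : 0 < z i ↔ s.sign i = true := by
  grind [mem_quad_iff.1 hz i]

theorem mul_pos_iff_of_mem_quad (hz : z ∈ Quad s) (i j : Fin 2) :
    0 < z i * z j ↔ s.sign i = s.sign j := by
  grind [mul_pos_iff, ne_zero_of_mem_quad hz i, ne_zero_of_mem_quad hz j,
    pos_iff_of_mem_quad hz i, pos_iff_of_mem_quad hz j]

theorem nrm_pos_of_mem_quad (hz : z ∈ Quad s) : 0 < nrm z := by
  have h := ne_zero_of_mem_quad hz 0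
  exact Real.sqrt_pos.2 (by positivity)

theorem contracts_of_nrm_lt (hl : 0 < l) (hz : z ∈ Quad s)
    (h : nrm (act l (FreeGroup.mk [a]) z) < nrm z) : a.Contracts s := by
  have hneg : a.coeff l * (z a.row * z a.col) < 0 :=
    mul_mul_neg_of_abs_add_mul_lt (lt_iff_lt_of_le_iff_le nrm_le_nrm_act_letter_iff |>.1 h)
  have hsign := mul_pos_iff_of_mem_quad hz a.row a.col
  rcases hexp : a.2 with _ | _
  · have hpos : 0 < z a.row * z a.col := by simpa [Letter.coeff, hexp, hl] using hneg
    simpa [Letter.Contracts, hexp] using hsign.1 hpos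
  · have hneg' : z a.row * z a.col < 0 :=
      neg_of_mul_neg_right (by simpa [Letter.coeff, hexp] using hneg) hl.le
    simpa [Letter.Contracts, hexp, Bool.eq_not] using hsign.not.1 hneg'.not_gt

theorem sign_col_eq_of_act_letter (hz : z ∈ Quad s)
    (hz' : act l (FreeGroup.mk [a]) z ∈ Quad s') : s.sign a.col = s'.sign a.col := by
  have hcol : act l (FreeGroup.mk [a]) z a.col = z a.col := by
    simp [act_letter, a.row_ne_col.symm]
  rw [Bool.eq_iff_iff, ← pos_iff_of_mem_quad hz, ← pos_iff_of_mem_quad hz', hcol]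

theorem sign_row_eq_of_isReduced (hred : FreeGroup.IsReduced [b, a]) (ha : a.Contracts s)
    (hb : b.Contracts s') (hcol : s.sign a.col = s'.sign a.col) :
    s.sign b.row = s'.sign b.row := by
  rcases Letter.eq_or_swap_of_isReduced hred with rfl | ⟨hrow, -⟩
  · rw [ha, hb, hcol]
  · rwa [hrow]

theorem letterSigma_gamma_eq (hb : b.Contracts s') (hrow : s.sign b.row = s'.sign b.row) :
    letterSigma b.gamma s = s' := by
  unfold Letter.Contracts at hb
  revert b s s'
  decide

end Signs

theorem stmt12_general (l : ℝ) (hl : 2 ≤ l) (x : Fin 2 → ℝ)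
    (g : ℕ → F2) (hg : IsGeodesicRay g) (hgs : IsShrinkingSeq l g x)
    (s : ℕ → SP) (hs : ∀ i, act l (g i) x ∈ Quad (s i)) (n : ℕ) :
    s n = SigmaAct (gammaAut (g (n + 1))) (s 0) := by
  obtain ⟨a, ha⟩ := hg.exists_isSpelledBy
  have hact (n : ℕ) : act l (g (n + 1)) x = act l (FreeGroup.mk [a n]) (act l (g n) x) := by
    rw [ha.succ, act_mul]
  have hshorten := ha.strictAnti_nrm (hl.trans (le_abs_self l)) hgs
    fun n => nrm_pos_of_mem_quad (hs n)
  have hcontracts (n : ℕ) : (a n).Contracts (s n) :=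
    contracts_of_nrm_lt (by linarith) (hs n) (by simpa only [hact] using hshorten n.lt_succ_self)
  induction n with
  | zero =>
    rw [ha.succ, sigmaAct_gammaAut_letter_mul (ha.isReduced_cons_toWord 0), ha.zero, map_one]
    exact (letterSigma_gamma_eq (hcontracts 0) rfl).symm
  | succ n ih =>
    rw [ha.succ, sigmaAct_gammaAut_letter_mul (ha.isReduced_cons_toWord (n + 1)), ← ih]
    have hcol : (s n).sign (a n).col = (s (n + 1)).sign (a n).col :=
      sign_col_eq_of_act_letter (hs n) (hact n ▸ hs (n + 1))
    exact (letterSigma_gamma_eq (hcontracts (n + 1)) (sign_row_eq_of_isReduced (ha.isReduced n)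
      (hcontracts n) (hcontracts (n + 1)) hcol)).symm

theorem stmt12 (l : ℝ) (hl : 2 ≤ l) (x : Fin 2 → ℝ) (hx : x ∈ Circ)
    (hren : Renormalizable l x)
    (g : ℕ → F2) (hg : IsGeodesicRay g) (hgs : IsShrinkingSeq l g x)
    (s : ℕ → SP) (hs : ∀ i, act l (g i) x ∈ Quad (s i))
    (t : ℕ) (ht : 1 ≤ t) (hcrit : s (t - 1) = s t) :
    s t = SigmaAct (gammaAut (g t)) (s 0) := by
  rw [← hcrit, stmt12_general l hl x g hg hgs s hs (t - 1), Nat.sub_add_cancel ht]
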